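/- arXiv:2406.05017 — 3 statements merged into one kernel-verified Lean document; each statement's English description precedes it below -/
import Mathlib

section
/- Let ξ = (√3·σ̄/κ)·√((d+1)·log(1+2T/d) + log(2/δ)). On the event that ‖θ̂_{t,j} − θ_j‖_{V_j^{(t)}} ≤ ξ holds for all t ∈ [T₀, T] and all j ∈ [N], the cumulative regret of the UCR algorithm satisfies R_T ≤ R_{T₀} + 2·M₁·ξ·∑_{t=T₀}^{T} ∑_{k=1}^{K} c_k·‖Z_{t,q_t(k)}‖_{(V_{q_t(k)}^{(t)})⁻¹}. -/
open Matrix Finset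

noncomputable section

/-- Rescaled position of display slot `k` among `K` slots: `(k+1)/K - 1/2`. -/
def ppos (K : ℕ) (k : Fin K) : ℝ := ((k : ℕ) + 1) / K - 1 / 2

/-- Augmented feature `(position, context) ∈ ℝ^{d+1}`. -/
def aug (d : ℕ) (p : ℝ) (x : Fin d → ℝ) : Fin (d + 1) → ℝ := Fin.cons p x

/-- Euclidean dot product. -/
def dotp {n : ℕ} (u v : Fin n → ℝ) : ℝ := ∑ i, u i * v i

/-- `‖v‖_M = √(vᵀ M v)`. -/
def matNorm {n : ℕ} (M : Matrix (Fin n) (Fin n) ℝ) (v : Fin n → ℝ) : ℝ :=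
  Real.sqrt (dotp v (M.mulVec v))

/-- The expected user satisfaction `r(x, f) = H(∑_k g_k(A'(θ_{f(k)}ᵀ (pos k, x))))` of the
ranking action that displays item `f k` in slot `k`. -/
def sat (d K N : ℕ) (A H : ℝ → ℝ) (g : Fin K → ℝ → ℝ)
    (θ : Fin N → Fin (d + 1) → ℝ) (x : Fin d → ℝ) (f : Fin K → Fin N) : ℝ :=
  H (∑ k, g k (deriv A (dotp (θ (f k)) (aug d (ppos K k) x))))

/-- The upper-confidence index of a ranking action. -/
def Uidx (d K N : ℕ) (A H : ℝ → ℝ) (g : Fin K → ℝ → ℝ)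
    (θh : Fin N → Fin (d + 1) → ℝ) (Vs : Fin N → Matrix (Fin (d + 1)) (Fin (d + 1)) ℝ)
    (ξ : ℝ) (x : Fin d → ℝ) (f : Fin K → Fin N) : ℝ :=
  H (∑ k, g k (deriv A (dotp (θh (f k)) (aug d (ppos K k) x) +
    ξ * matNorm ((Vs (f k))⁻¹) (aug d (ppos K k) x))))

/-- Cumulative regret of a realized trajectory over the first `n` rounds, against the best
selection-and-ranking (injection from slots to items) for each context. -/
def regSum (d K N : ℕ) (A H : ℝ → ℝ) (g : Fin K → ℝ → ℝ)
    (θ : Fin N → Fin (d + 1) → ℝ) (x : ℕ → Fin d → ℝ)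
    (act : ℕ → Fin K → Fin N) (n : ℕ) : ℝ :=
  ∑ t ∈ Finset.Icc 1 n,
    ((⨆ f : Fin K ↪ Fin N, sat d K N A H g θ (x t) ⇑f) -
      sat d K N A H g θ (x t) (act t))

lemma cs_aux {n : ℕ} (V : Matrix (Fin n) (Fin n) ℝ) (hV : V.PosDef) (u z : Fin n → ℝ) :
    |dotp u z| ≤ matNorm V u * matNorm V⁻¹ z := by
  have hdot : ∀ a b : Fin n → ℝ, dotp a b = a ⬝ᵥ b := fun a b => rfl
  have hunit : IsUnit V.det := hV.det_pos.ne'.isUnit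
  obtain ⟨w, rfl⟩ : ∃ w, V *ᵥ w = z := ⟨V⁻¹ *ᵥ z, by
    rw [Matrix.mulVec_mulVec, Matrix.mul_nonsing_inv _ hunit, Matrix.one_mulVec]⟩
  have hsymm : Vᵀ = V := by
    have := hV.isHermitian
    rwa [Matrix.IsHermitian, Matrix.conjTranspose_eq_transpose_of_trivial] at this
  have hnn : ∀ y : Fin n → ℝ, 0 ≤ y ⬝ᵥ (V *ᵥ y) := fun y => by
    simpa using hV.posSemidef.dotProduct_mulVec_nonneg y
  have hcomm : ∀ a b : Fin n → ℝ, a ⬝ᵥ (V *ᵥ b) = b ⬝ᵥ (V *ᵥ a) := fun a b => by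
    rw [Matrix.dotProduct_mulVec, ← Matrix.mulVec_transpose, hsymm, dotProduct_comm]
  unfold matNorm
  simp only [hdot]
  rw [Matrix.mulVec_mulVec, Matrix.nonsing_inv_mul _ hunit, Matrix.one_mulVec,
    dotProduct_comm (V *ᵥ w) w, ← Real.sqrt_mul (hnn u)]
  apply Real.abs_le_sqrt
  have hq : ∀ s : ℝ, 0 ≤ (w ⬝ᵥ (V *ᵥ w)) * (s * s) + (2 * (u ⬝ᵥ (V *ᵥ w))) * s
      + u ⬝ᵥ (V *ᵥ u) := fun s => by
    have h := hnn (u + s • w)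
    simp only [Matrix.mulVec_add, Matrix.mulVec_smul, add_dotProduct, dotProduct_add,
      smul_dotProduct, dotProduct_smul, smul_eq_mul] at h
    rw [hcomm w u] at h
    linarith
  have := discrim_le_zero hq
  unfold discrim at this
  nlinarith

lemma tel_aux {K : ℕ} (F : (Fin K → ℝ) → ℝ) (c : Fin K → ℝ)
    (hLip : ∀ (k : Fin K) (μ μ' : Fin K → ℝ), (∀ l, l ≠ k → μ l = μ' l) →
      |F μ - F μ'| ≤ c k * |μ k - μ' k|) (μ μ' : Fin K → ℝ) :
    |F μ - F μ'| ≤ ∑ k, c k * |μ k - μ' k| := by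
  have key : ∀ s : Finset (Fin K),
      |F (s.piecewise μ μ') - F μ'| ≤ ∑ k ∈ s, c k * |μ k - μ' k| := by
    intro s
    induction s using Finset.induction_on with
    | empty => simp
    | insert a s ha ih =>
      rw [Finset.sum_insert ha]
      have h := hLip a ((insert a s).piecewise μ μ') (s.piecewise μ μ') (fun l hl => by
        simp [Finset.piecewise, hl])
      have e1 : (insert a s).piecewise μ μ' a = μ a := by simp
      have e2 : s.piecewise μ μ' a = μ' a := by simp [ha]
      rw [e1, e2] at h
      exact (abs_sub_le _ _ _).trans (add_le_add h ih)
  simpa using key Finset.univ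

/-- Lemma 4.3: with
`ξ = (√3 σ̄/κ)√((d+1)log(1+2T/d) + log(2/δ))`, on any trajectory on which the event
`‖θ̂_{t,j} - θ_j‖_{V_j^{(t)}} ≤ ξ` holds for all `t ∈ [T₀, T]` and all `j ∈ [N]`
(with the design matrices well-conditioned), the cumulative regret of UCR satisfies
`R_T ≤ R_{T₀} + 2 M₁ ξ ∑_{t=T₀}^T ∑_k c_k ‖Z_{t,q_t(k)}‖_{(V_{q_t(k)}^{(t)})⁻¹}`. -/
theorem stmt_6 (d K N T T₀ : ℕ) (hd : 0 < d) (hK : 0 < K) (hN : 0 < N) (hKN : K ≤ N)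
    (hT₀1 : 1 ≤ T₀) (hT₀T : T₀ ≤ T)
    (sigb κ δ M₁ ξ : ℝ) (hsigb : 0 < sigb) (hκpos : 0 < κ) (hδ : 0 < δ) (hδ1 : δ < 1)
    (hξ : ξ = Real.sqrt 3 * sigb / κ *
      Real.sqrt (((d : ℝ) + 1) * Real.log (1 + 2 * (T : ℝ) / d) + Real.log (2 / δ)))
    (A H : ℝ → ℝ) (g : Fin K → ℝ → ℝ) (c : Fin K → ℝ)
    (x : ℕ → Fin d → ℝ)                  -- realized contexts
    (act : ℕ → Fin K → Fin N)            -- realized actions: item shown in each slot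
    (θ : Fin N → Fin (d + 1) → ℝ)        -- true item parameters
    (θhat : ℕ → Fin N → Fin (d + 1) → ℝ) -- estimates
    (V : ℕ → Fin N → Matrix (Fin (d + 1)) (Fin (d + 1)) ℝ)
    (hinj : ∀ t, Function.Injective (act t))
    -- the design matrices of the trajectory
    (hV : ∀ t j, V t j = ∑ τ ∈ Finset.Ico 1 t, ∑ k : Fin K,
      if act τ k = j then
        Matrix.vecMulVec (aug d (ppos K k) (x τ)) (aug d (ppos K k) (x τ))
      else 0)
    (hVpd : ∀ t ∈ Finset.Icc T₀ T, ∀ j : Fin N, (V t j).PosDef)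
    -- Assumption 2: monotonicity, `A''` bounded by `M₁`, coordinatewise Lipschitz constants
    (hA1 : Differentiable ℝ A) (hA2 : Differentiable ℝ (deriv A))
    (hA'mono : Monotone (deriv A)) (hHmono : Monotone H) (hgmono : ∀ k, Monotone (g k))
    (hM₁ : ∀ y : ℝ, |deriv (deriv A) y| ≤ M₁)
    (hc : ∀ k, 0 ≤ c k)
    (hLip : ∀ (k : Fin K) (μ μ' : Fin K → ℝ), (∀ l, l ≠ k → μ l = μ' l) →
      |H (∑ l, g l (μ l)) - H (∑ l, g l (μ' l))| ≤ c k * |μ k - μ' k|)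
    -- the event of Proposition 4.2: uniform estimation-error bound
    (hevent : ∀ t ∈ Finset.Icc T₀ T, ∀ j : Fin N,
      matNorm (V t j) (θhat t j - θ j) ≤ ξ)
    -- UCR: for t ∈ [T₀, T] the chosen action maximizes the upper-confidence index
    (hUCR : ∀ t ∈ Finset.Icc T₀ T, ∀ f : Fin K ↪ Fin N,
      Uidx d K N A H g (θhat t) (V t) ξ (x t) ⇑f ≤
        Uidx d K N A H g (θhat t) (V t) ξ (x t) (act t)) :
    regSum d K N A H g θ x act T ≤
      regSum d K N A H g θ x act T₀ +
        2 * M₁ * ξ * ∑ t ∈ Finset.Icc T₀ T, ∑ k : Fin K,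
          c k * matNorm ((V t (act t k))⁻¹) (aug d (ppos K k) (x t)) := by
  have hξ0 : 0 ≤ ξ := by rw [hξ]; exact mul_nonneg (by positivity) (Real.sqrt_nonneg _)
  have hM0 : 0 ≤ M₁ := (abs_nonneg _).trans (hM₁ 0)
  have hmn : ∀ {n : ℕ} (M : Matrix (Fin n) (Fin n) ℝ) (v : Fin n → ℝ), 0 ≤ matNorm M v :=
    fun M v => Real.sqrt_nonneg _
  have hA'lip : ∀ a b : ℝ, |deriv A a - deriv A b| ≤ M₁ * |a - b| := fun a b => by
    have := Convex.norm_image_sub_le_of_norm_deriv_le (f := deriv A) (s := Set.univ) (C := M₁)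
      (x := b) (y := a) (fun y _ => hA2 y) (fun y _ => by simpa using hM₁ y) convex_univ
      (Set.mem_univ _) (Set.mem_univ _)
    simpa using this
  have hconf : ∀ t ∈ Finset.Icc T₀ T, ∀ (j : Fin N) (z : Fin (d + 1) → ℝ),
      |dotp (θhat t j) z - dotp (θ j) z| ≤ ξ * matNorm ((V t j)⁻¹) z := fun t ht j z => by
    have h := cs_aux (V t j) (hVpd t ht j) (θhat t j - θ j) z
    have e : dotp (θhat t j - θ j) z = dotp (θhat t j) z - dotp (θ j) z := by
      simp [dotp, sub_mul, Finset.sum_sub_distrib]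
    rw [e] at h
    exact h.trans (mul_le_mul_of_nonneg_right (hevent t ht j) (hmn _ _))
  haveI : Nonempty (Fin K ↪ Fin N) := ⟨Fin.castLEEmb hKN⟩
  have hround : ∀ t ∈ Finset.Icc T₀ T,
      ((⨆ f : Fin K ↪ Fin N, sat d K N A H g θ (x t) ⇑f) - sat d K N A H g θ (x t) (act t)) ≤
      2 * M₁ * ξ * ∑ k : Fin K,
        c k * matNorm ((V t (act t k))⁻¹) (aug d (ppos K k) (x t)) := fun t ht => by
    have h1 : (⨆ f : Fin K ↪ Fin N, sat d K N A H g θ (x t) ⇑f) ≤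
        Uidx d K N A H g (θhat t) (V t) ξ (x t) (act t) := by
      refine ciSup_le fun f => le_trans ?_ (hUCR t ht f)
      refine hHmono (Finset.sum_le_sum fun k _ => hgmono k (hA'mono ?_))
      have := abs_le.1 (hconf t ht (f k) (aug d (ppos K k) (x t)))
      linarith [this.1]
    have h2 := (le_abs_self _).trans (tel_aux (fun μ => H (∑ l, g l (μ l))) c hLip
      (fun k => deriv A (dotp (θhat t (act t k)) (aug d (ppos K k) (x t)) +
        ξ * matNorm ((V t (act t k))⁻¹) (aug d (ppos K k) (x t))))
      (fun k => deriv A (dotp (θ (act t k)) (aug d (ppos K k) (x t)))))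
    have h3 : ∑ k, c k * |deriv A (dotp (θhat t (act t k)) (aug d (ppos K k) (x t)) +
        ξ * matNorm ((V t (act t k))⁻¹) (aug d (ppos K k) (x t))) -
        deriv A (dotp (θ (act t k)) (aug d (ppos K k) (x t)))| ≤
        2 * M₁ * ξ * ∑ k : Fin K,
        c k * matNorm ((V t (act t k))⁻¹) (aug d (ppos K k) (x t)) := by
      rw [Finset.mul_sum]
      refine Finset.sum_le_sum fun k _ => ?_
      set z := aug d (ppos K k) (x t)
      set m := matNorm ((V t (act t k))⁻¹) z
      have hb := abs_le.1 (hconf t ht (act t k) z)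
      have hm : 0 ≤ ξ * m := mul_nonneg hξ0 (hmn _ _)
      have h4 : |dotp (θhat t (act t k)) z + ξ * m - dotp (θ (act t k)) z| ≤ 2 * (ξ * m) := by
        rw [abs_le]; constructor <;> linarith [hb.1, hb.2]
      calc _ ≤ c k * (M₁ * (2 * (ξ * m))) :=
            mul_le_mul_of_nonneg_left
              ((hA'lip _ _).trans (mul_le_mul_of_nonneg_left h4 hM0)) (hc k)
        _ = _ := by ring
    have h5 : Uidx d K N A H g (θhat t) (V t) ξ (x t) (act t) - sat d K N A H g θ (x t) (act t)
      ≤ _ := h2.trans h3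
    linarith
  have hsplit : regSum d K N A H g θ x act T = regSum d K N A H g θ x act T₀ +
      ∑ t ∈ Finset.Ioc T₀ T, ((⨆ f : Fin K ↪ Fin N, sat d K N A H g θ (x t) ⇑f) -
        sat d K N A H g θ (x t) (act t)) := by
    unfold regSum
    rw [← Finset.sum_union]
    · congr 1
      ext t; simp only [Finset.mem_union, Finset.mem_Icc, Finset.mem_Ioc]; omega
    · rw [Finset.disjoint_left]
      intro t; simp only [Finset.mem_Icc, Finset.mem_Ioc]; omega
  rw [hsplit, Finset.mul_sum]
  refine add_le_add le_rfl ?_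
  refine (Finset.sum_le_sum fun t ht => hround t (Finset.Ioc_subset_Icc_self ht)).trans ?_
  refine Finset.sum_le_sum_of_subset_of_nonneg Finset.Ioc_subset_Icc_self fun t _ _ => ?_
  have : 0 ≤ ∑ k : Fin K, c k * matNorm ((V t (act t k))⁻¹) (aug d (ppos K k) (x t)) :=
    Finset.sum_nonneg fun k _ => mul_nonneg (hc k) (hmn _ _)
  positivity

end
end

section
/- Let z₁, …, z_m ∈ ℝⁿ be such that V := ∑_{i=1}^m z_i z_iᵀ is positive definite, let A : ℝ → ℝ be twice differentiable, and let θ, θ′ ∈ ℝⁿ and κ > 0 be such that A″(ηᵀ z_i) ≥ κ for every i and every η on the line segment between θ and θ′. Define g(η) := ∑_{i=1}^m A′(ηᵀ z_i)·z_i. Then ‖g(θ) − g(θ′)‖²_{V⁻¹} ≥ κ²·‖θ − θ′‖²_V, where ‖x‖²_B := xᵀ B x. Moreover, ‖g(θ) − g(θ′)‖²_{V⁻¹} ≥ κ²·λ_min(V)·‖θ − θ′‖², where λ_min(V) is the minimum eigenvalue of V. -/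
open Matrix Finset

lemma aux_mvt {n : ℕ} (A : ℝ → ℝ) (hA : ContDiff ℝ 2 A) (θ θ' z : Fin n → ℝ) (κ : ℝ)
    (h : ∀ η ∈ segment ℝ θ θ', κ ≤ deriv (deriv A) (η ⬝ᵥ z)) :
    κ * ((θ - θ') ⬝ᵥ z) ^ 2 ≤
      (deriv A (θ ⬝ᵥ z) - deriv A (θ' ⬝ᵥ z)) * ((θ - θ') ⬝ᵥ z) := by
  have hd : Differentiable ℝ (deriv A) := by
    have h2 : ContDiff ℝ (1 + 1) A := by simpa [one_add_one_eq_two] using hA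
    exact (contDiff_succ_iff_deriv.1 h2).2.2.differentiable (by simp)
  have hφ : ∀ t : ℝ, HasDerivAt (fun t : ℝ => deriv A (θ' ⬝ᵥ z + t * ((θ - θ') ⬝ᵥ z)))
      (deriv (deriv A) (θ' ⬝ᵥ z + t * ((θ - θ') ⬝ᵥ z)) * ((θ - θ') ⬝ᵥ z)) t := by
    intro t
    have h1 : HasDerivAt (fun t : ℝ => θ' ⬝ᵥ z + t * ((θ - θ') ⬝ᵥ z)) ((θ - θ') ⬝ᵥ z) t := by
      simpa using ((hasDerivAt_id t).mul_const ((θ - θ') ⬝ᵥ z)).const_add (θ' ⬝ᵥ z)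
    exact (hd _).hasDerivAt.comp t h1
  obtain ⟨c, hc, hc'⟩ := exists_hasDerivAt_eq_slope _ _ (zero_lt_one (α := ℝ))
    (fun t _ => (hφ t).continuousAt.continuousWithinAt) (fun t _ => hφ t)
  have hmem : θ' + c • (θ - θ') ∈ segment ℝ θ θ' := by
    rw [segment_symm, segment_eq_image']
    exact ⟨c, ⟨hc.1.le, hc.2.le⟩, rfl⟩
  have hk := h _ hmem
  rw [add_dotProduct, smul_dotProduct, smul_eq_mul] at hk
  have e : θ' ⬝ᵥ z + 1 * ((θ - θ') ⬝ᵥ z) = θ ⬝ᵥ z := by rw [sub_dotProduct]; ring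
  simp only [e, zero_mul, add_zero, sub_zero, div_one] at hc'
  rw [← hc']
  nlinarith [mul_le_mul_of_nonneg_right hk (sq_nonneg ((θ - θ') ⬝ᵥ z))]

lemma aux_eig {n : ℕ} (V : Matrix (Fin n) (Fin n) ℝ) (hV : V.IsHermitian) (d : Fin n → ℝ) :
    (⨅ i, hV.eigenvalues i) * (∑ i, d i ^ 2) ≤ d ⬝ᵥ V.mulVec d := by
  set U : Matrix (Fin n) (Fin n) ℝ := (hV.eigenvectorUnitary : Matrix (Fin n) (Fin n) ℝ) with hU
  have hs : V = U * diagonal hV.eigenvalues * Uᵀ := by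
    have := hV.spectral_theorem
    rw [Unitary.conjStarAlgAut_apply] at this
    exact this
  have hUU : U * Uᵀ = 1 := Unitary.coe_mul_star_self hV.eigenvectorUnitary
  set e := Uᵀ *ᵥ d with he
  have h1 : d ⬝ᵥ V.mulVec d = ∑ i, hV.eigenvalues i * e i ^ 2 := by
    have : V *ᵥ d = U *ᵥ (diagonal hV.eigenvalues *ᵥ e) := by
      conv_lhs => rw [hs]
      simp [he, mulVec_mulVec, Matrix.mul_assoc]
    rw [this, dotProduct_mulVec, ← mulVec_transpose, ← he]
    simp only [dotProduct, mulVec_diagonal]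
    exact Finset.sum_congr rfl fun i _ => by ring
  have h2 : ∑ i, d i ^ 2 = ∑ i, e i ^ 2 := by
    have : e ⬝ᵥ e = d ⬝ᵥ d := by
      conv_lhs => rw [he, dotProduct_mulVec, vecMul_transpose, mulVec_mulVec, hUU, one_mulVec]
    simpa [dotProduct, sq] using this.symm
  rw [h1, h2, Finset.mul_sum]
  refine Finset.sum_le_sum fun i _ => mul_le_mul_of_nonneg_right ?_ (sq_nonneg _)
  exact ciInf_le (Set.finite_range _).bddBelow i

/-- for `V = ∑ zᵢzᵢᵀ ≻ 0`, `A` twice differentiable with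
`A''(ηᵀzᵢ) ≥ κ` on the segment between `θ` and `θ'`, the GLM gradient map
`g η = ∑ A'(ηᵀzᵢ) zᵢ` satisfies `‖g θ - g θ'‖²_{V⁻¹} ≥ κ² ‖θ - θ'‖²_V` and
`‖g θ - g θ'‖²_{V⁻¹} ≥ κ² λ_min(V) ‖θ - θ'‖²`. -/
theorem stmt_9 {n m : ℕ} (z : Fin m → Fin n → ℝ) (A : ℝ → ℝ)
    (hA : ContDiff ℝ 2 A) (θ θ' : Fin n → ℝ) (κ : ℝ) (hκ : 0 < κ)
    (V : Matrix (Fin n) (Fin n) ℝ)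
    (hVdef : V = ∑ i, Matrix.vecMulVec (z i) (z i))
    (hVpd : V.PosDef)
    (hA'' : ∀ (i : Fin m), ∀ η ∈ segment ℝ θ θ', κ ≤ deriv (deriv A) (η ⬝ᵥ z i))
    (g : (Fin n → ℝ) → (Fin n → ℝ))
    (hg : g = fun η => ∑ i, deriv A (η ⬝ᵥ z i) • z i) :
    κ ^ 2 * ((θ - θ') ⬝ᵥ V.mulVec (θ - θ')) ≤ (g θ - g θ') ⬝ᵥ V⁻¹.mulVec (g θ - g θ') ∧
    κ ^ 2 * (⨅ i, hVpd.1.eigenvalues i) * (∑ i, (θ i - θ' i) ^ 2) ≤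
      (g θ - g θ') ⬝ᵥ V⁻¹.mulVec (g θ - g θ') := by
  have hdV : (θ - θ') ⬝ᵥ V.mulVec (θ - θ') = ∑ i, ((θ - θ') ⬝ᵥ z i) ^ 2 := by
    rw [hVdef, Matrix.sum_mulVec, dotProduct_sum]
    refine Finset.sum_congr rfl fun i _ => ?_
    rw [vecMulVec_mulVec, dotProduct_comm (z i)]
    simp [sq]
  have hdw : κ * ((θ - θ') ⬝ᵥ V.mulVec (θ - θ')) ≤ (θ - θ') ⬝ᵥ (g θ - g θ') := by
    rw [hdV, hg, Finset.mul_sum]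
    simp only [← Finset.sum_sub_distrib, ← sub_smul]
    rw [dotProduct_sum]
    refine Finset.sum_le_sum fun i _ => ?_
    rw [dotProduct_smul, smul_eq_mul]
    exact aux_mvt A hA θ θ' (z i) κ (hA'' i)
  have main : κ ^ 2 * ((θ - θ') ⬝ᵥ V.mulVec (θ - θ')) ≤
      (g θ - g θ') ⬝ᵥ V⁻¹.mulVec (g θ - g θ') := by
    generalize g θ - g θ' = w at *
    generalize θ - θ' = d at *
    have hdet : IsUnit V.det := hVpd.det_pos.ne'.isUnit
    have hVT : Vᵀ = V := hVpd.1
    obtain ⟨u, hu⟩ : ∃ u, u = V⁻¹ *ᵥ w := ⟨_, rfl⟩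
    have hw : V *ᵥ u = w := by rw [hu, mulVec_mulVec, Matrix.mul_nonsing_inv _ hdet, one_mulVec]
    have h0 : 0 ≤ (u - κ • d) ⬝ᵥ (V *ᵥ (u - κ • d)) := by
      simpa using hVpd.posSemidef.dotProduct_mulVec_nonneg (u - κ • d)
    have hsym : u ⬝ᵥ V *ᵥ d = d ⬝ᵥ w := by
      rw [dotProduct_mulVec, ← mulVec_transpose, hVT, hw, dotProduct_comm]
    rw [mulVec_sub, mulVec_smul, hw] at h0
    simp only [sub_dotProduct, dotProduct_sub, smul_dotProduct, dotProduct_smul, smul_eq_mul,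
      hsym] at h0
    rw [← hu, dotProduct_comm w u]
    nlinarith [mul_le_mul_of_nonneg_left hdw hκ.le]
  refine ⟨main, le_trans ?_ main⟩
  rw [mul_assoc]
  exact mul_le_mul_of_nonneg_left (aux_eig V hVpd.1 (θ - θ')) (sq_nonneg _)
end

section
/- Let x₁, …, x_n ∈ ℝ^d with ‖x_s‖ ≤ 1 for all s, let V₀ be a d × d symmetric positive definite matrix with λ_min(V₀) ≥ 1 and det(V₀) ≥ 1, and set V_s := V₀ + ∑_{i=1}^s x_i x_iᵀ. Then ∑_{s=1}^n ‖x_s‖_{(V_{s−1})⁻¹} ≤ √( n · ( 2d·log((tr(V₀) + n)/d) − 2·log det(V₀) ) ), where ‖x‖_A := √(xᵀ A x). In particular, if tr(V₀) + n ≤ T then ∑_{s=1}^n ‖x_s‖_{(V_{s−1})⁻¹} ≤ √(n · 2d·log(T/d)). -/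
open Matrix Finset

theorem aux_logdet (d : ℕ) (hd : 0 < d) (A : Matrix (Fin d) (Fin d) ℝ) (hA : A.PosDef) :
    0 < A.trace ∧ Real.log A.det ≤ d * Real.log (A.trace / d) := by
  have hpos := hA.eigenvalues_pos
  have hdet : A.det = ∏ i, hA.isHermitian.eigenvalues i := by
    simpa using hA.isHermitian.det_eq_prod_eigenvalues
  have htr : A.trace = ∑ i, hA.isHermitian.eigenvalues i := by
    simpa using hA.isHermitian.trace_eq_sum_eigenvalues
  have hd' : (0 : ℝ) < d := by exact_mod_cast hd
  haveI : Nonempty (Fin d) := ⟨⟨0, hd⟩⟩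
  have htp : 0 < A.trace := by
    rw [htr]; exact Finset.sum_pos (fun i _ => hpos i) Finset.univ_nonempty
  refine ⟨htp, ?_⟩
  set m := A.trace / d with hm
  have hmp : 0 < m := div_pos htp hd'
  have h1 : ∀ i, Real.log (hA.isHermitian.eigenvalues i) ≤
      Real.log m + (hA.isHermitian.eigenvalues i / m - 1) := by
    intro i
    have := Real.log_le_sub_one_of_pos (div_pos (hpos i) hmp)
    rw [Real.log_div (hpos i).ne' hmp.ne'] at this
    linarith
  rw [hdet, Real.log_prod (fun i _ => (hpos i).ne')]
  refine (Finset.sum_le_sum (fun i _ => h1 i)).trans ?_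
  rw [Finset.sum_add_distrib, Finset.sum_sub_distrib, ← Finset.sum_div, ← htr]
  have : A.trace / m = d := by rw [hm]; field_simp
  rw [this]; simp

theorem aux_det (d : ℕ) (A : Matrix (Fin d) (Fin d) ℝ) (hA : A.PosDef) (x : Fin d → ℝ) :
    (A + Matrix.vecMulVec x x).det = A.det * (1 + x ⬝ᵥ A⁻¹.mulVec x) := by
  have h := Matrix.det_add_replicateCol_mul_replicateRow (ι := Unit) (A := A)
    hA.det_pos.ne'.isUnit x x
  rw [vecMulVec_eq Unit, h]
  congr 1
  rw [Matrix.det_unique, Matrix.mul_assoc, ← Matrix.replicateCol_mulVec]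
  simp [Matrix.mul_apply, dotProduct]

theorem aux_q (d : ℕ) (A : Matrix (Fin d) (Fin d) ℝ) (hA : A.PosDef)
    (h1 : (A - 1).PosSemidef) (x : Fin d → ℝ) (hx : ∑ i, x i ^ 2 ≤ 1) :
    0 ≤ x ⬝ᵥ A⁻¹.mulVec x ∧ x ⬝ᵥ A⁻¹.mulVec x ≤ 1 := by
  constructor
  · simpa using hA.inv.posSemidef.dotProduct_mulVec_nonneg x
  set y := A⁻¹.mulVec x with hy
  have hAy : A.mulVec y = x := by
    rw [hy, Matrix.mulVec_mulVec, Matrix.mul_nonsing_inv _ hA.det_pos.ne'.isUnit,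
      Matrix.one_mulVec]
  have h2 : 0 ≤ y ⬝ᵥ (A - 1).mulVec y := by
    simpa using h1.dotProduct_mulVec_nonneg y
  rw [Matrix.sub_mulVec, hAy, Matrix.one_mulVec, dotProduct_sub, dotProduct_comm y x] at h2
  have h3 : 0 ≤ (x - y) ⬝ᵥ (x - y) := by
    simp only [dotProduct]; exact Finset.sum_nonneg fun i _ => mul_self_nonneg _
  rw [sub_dotProduct, dotProduct_sub, dotProduct_sub, dotProduct_comm y x] at h3
  have h4 : x ⬝ᵥ x ≤ 1 := by simpa [dotProduct, sq] using hx
  linarith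

theorem aux_log (u : ℝ) (h0 : 0 ≤ u) (h1 : u ≤ 1) : u ≤ 2 * Real.log (1 + u) := by
  have h := Real.one_sub_inv_le_log_of_pos (show 0 < 1 + u by linarith)
  have : u / 2 ≤ 1 - (1 + u)⁻¹ := by
    have : 1 - (1 + u)⁻¹ = u / (1 + u) := by field_simp; ring
    rw [this]
    gcongr
    linarith
  linarith

/-- deterministic elliptical-potential bound. With `‖x_s‖ ≤ 1`,
`V₀` symmetric positive definite with `λ_min(V₀) ≥ 1` (i.e. `V₀ - I ⪰ 0`) and
`det V₀ ≥ 1`, and `V_s = V₀ + ∑_{i ≤ s} x_i x_iᵀ`, the sum of self-normalized norms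
`∑_{s=1}^n ‖x_s‖_{V_{s-1}⁻¹}` is at most
`√(n (2d log((tr V₀ + n)/d) - 2 log det V₀))`; in particular, if `tr V₀ + n ≤ T`
then it is at most `√(n · 2d log(T/d))`. -/
theorem stmt_17 (d n : ℕ) (hd : 0 < d) (x : ℕ → Fin d → ℝ)
    (hx : ∀ s ∈ Finset.Icc 1 n, ∑ i, (x s i) ^ 2 ≤ 1)
    (V₀ : Matrix (Fin d) (Fin d) ℝ) (hV₀sym : V₀.IsSymm) (hV₀pd : V₀.PosDef)
    (hV₀eig : (V₀ - 1).PosSemidef) (hV₀det : 1 ≤ V₀.det)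
    (V : ℕ → Matrix (Fin d) (Fin d) ℝ)
    (hV : ∀ s : ℕ, V s = V₀ + ∑ i ∈ Finset.Icc 1 s, Matrix.vecMulVec (x i) (x i)) :
    (∑ s ∈ Finset.Icc 1 n, Real.sqrt (x s ⬝ᵥ (V (s - 1))⁻¹.mulVec (x s)) ≤
      Real.sqrt (n * (2 * d * Real.log ((V₀.trace + n) / d) - 2 * Real.log V₀.det))) ∧
    ∀ T : ℝ, V₀.trace + n ≤ T →
      ∑ s ∈ Finset.Icc 1 n, Real.sqrt (x s ⬝ᵥ (V (s - 1))⁻¹.mulVec (x s)) ≤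
        Real.sqrt (n * (2 * d * Real.log (T / d))) := by
  have hpsd : ∀ s, (∑ i ∈ Finset.Icc 1 s, Matrix.vecMulVec (x i) (x i)).PosSemidef := by
    intro s
    refine Matrix.posSemidef_sum _ fun i _ => ?_
    simpa using Matrix.posSemidef_vecMulVec_self_star (x i)
  have hpd : ∀ s, (V s).PosDef := fun s => by
    rw [hV]; exact hV₀pd.add_posSemidef (hpsd s)
  have hge : ∀ s, (V s - 1).PosSemidef := fun s => by
    rw [hV, add_sub_right_comm]; exact hV₀eig.add (hpsd s)
  have hq : ∀ s ∈ Finset.Icc 1 n, 0 ≤ x s ⬝ᵥ (V (s - 1))⁻¹.mulVec (x s) ∧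
      x s ⬝ᵥ (V (s - 1))⁻¹.mulVec (x s) ≤ 1 :=
    fun s hs => aux_q d _ (hpd _) (hge _) _ (hx s hs)
  have hV0 : V 0 = V₀ := by rw [hV]; simp
  have hsucc : ∀ s, V (s + 1) = V s + Matrix.vecMulVec (x (s + 1)) (x (s + 1)) := by
    intro s
    rw [hV, hV, Finset.sum_Icc_succ_top (by omega), add_assoc]
  have hpot : ∀ m ≤ n, ∑ s ∈ Finset.Icc 1 m, x s ⬝ᵥ (V (s - 1))⁻¹.mulVec (x s) ≤
      2 * (Real.log (V m).det - Real.log V₀.det) := by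
    intro m
    induction m with
    | zero => intro _; simp [hV0]
    | succ k ih =>
      intro hk
      have hqk := hq (k + 1) (Finset.mem_Icc.2 ⟨by omega, hk⟩)
      rw [Nat.add_sub_cancel] at hqk
      have hl := aux_log _ hqk.1 hqk.2
      rw [Finset.sum_Icc_succ_top (by omega), Nat.add_sub_cancel, hsucc, aux_det d _ (hpd k),
        Real.log_mul (hpd k).det_pos.ne' (by linarith [hqk.1])]
      linarith [ih (by omega)]
  have hd' : (0 : ℝ) < d := by exact_mod_cast hd
  have htr : (V n).trace ≤ V₀.trace + n := by
    rw [hV, Matrix.trace_add, Matrix.trace_sum]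
    have : ∑ i ∈ Finset.Icc 1 n, (Matrix.vecMulVec (x i) (x i)).trace ≤
        ∑ i ∈ Finset.Icc 1 n, (1 : ℝ) := by
      refine Finset.sum_le_sum fun i hi => ?_
      simpa [Matrix.trace, Matrix.vecMulVec_apply, sq] using hx i hi
    simp at this
    simpa using this
  obtain ⟨htp, hld⟩ := aux_logdet d hd _ (hpd n)
  have hmono : Real.log ((V n).trace / d) ≤ Real.log ((V₀.trace + n) / d) :=
    Real.log_le_log (by positivity) (by gcongr)
  have hS : ∑ s ∈ Finset.Icc 1 n, x s ⬝ᵥ (V (s - 1))⁻¹.mulVec (x s) ≤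
      2 * d * Real.log ((V₀.trace + n) / d) - 2 * Real.log V₀.det := by
    have := mul_le_mul_of_nonneg_left hmono hd'.le
    linarith [hpot n le_rfl]
  have main : ∑ s ∈ Finset.Icc 1 n, Real.sqrt (x s ⬝ᵥ (V (s - 1))⁻¹.mulVec (x s)) ≤
      Real.sqrt (n * (2 * d * Real.log ((V₀.trace + n) / d) - 2 * Real.log V₀.det)) := by
    apply Real.le_sqrt_of_sq_le
    refine (sq_sum_le_card_mul_sum_sq (s := Finset.Icc 1 n)).trans ?_
    rw [Nat.card_Icc, Nat.add_sub_cancel]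
    gcongr
    refine le_trans (le_of_eq ?_) hS
    exact Finset.sum_congr rfl fun s hs => Real.sq_sqrt (hq s hs).1
  refine ⟨main, fun T hT => main.trans (Real.sqrt_le_sqrt ?_)⟩
  have h1 : Real.log ((V₀.trace + n) / d) ≤ Real.log (T / d) :=
    Real.log_le_log (div_pos (by linarith) hd') (by gcongr)
  have h2 : 0 ≤ Real.log V₀.det := Real.log_nonneg hV₀det
  have h3 := mul_le_mul_of_nonneg_left h1 hd'.le
  apply mul_le_mul_of_nonneg_left _ (Nat.cast_nonneg n)
  linarith
end
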